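/- Assume the integral VHI data hypotheses together with: K ⊆ V nonempty, closed and convex; A : V → V* Lipschitz continuous and strongly monotone with constant m_A > 0; Φ : V → ℝ convex and continuous; f ∈ V*; and α_ψ c_Δ² < m_A. Let Vʰ be a finite-dimensional linear subspace of V and let Kʰ be a nonempty, closed and convex subset of Vʰ. Then the discrete problem: find uʰ ∈ Kʰ such that ⟨Auʰ, vʰ − uʰ⟩ + Φ(vʰ) − Φ(uʰ) + ∫_Δ ψ⁰(γ_ψ uʰ(x); γ_ψ vʰ(x) − γ_ψ uʰ(x)) dμ(x) ≥ ⟨f, vʰ − uʰ⟩ for all vʰ ∈ Kʰ, has a unique solution uʰ ∈ Kʰ. -/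

import Mathlib

open Filter Topology MeasureTheory RealInnerProductSpace

/-- The Clarke (generalized) directional derivative of `f` at `u` in direction `v`. -/
noncomputable def clarkeDeriv {X : Type*} [NormedAddCommGroup X] [NormedSpace ℝ X]
    (f : X → ℝ) (u v : X) : ℝ :=
  Filter.limsup (fun p : X × ℝ => (f (p.1 + p.2 • v) - f p.1) / p.2)
    ((𝓝 u) ×ˢ 𝓝[>] (0:ℝ))

/-!
Relaxed monotonicity of `∂ψ` makes `ψ` weakly convex, that is, strongly convex with the negative
parameter `-α`, and makes `ψ⁰` the ordinary one-sided directional derivative of `ψ`. Both properties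
pass to `j v = ∫ ψ (γ v)`: it is weakly convex with parameter `-α c²`, where `c` bounds `γ`, and, by
the growth of `∂ψ` and dominated convergence, its one-sided derivative is the integral of `ψ⁰`.
Transferring the quadratic `α c² / 2 * ‖·‖²` from `A` to `j` leaves `A` strongly monotone, because
`α c² < m`, and makes `j` convex, so the problem becomes equivalent to a variational inequality of
the second kind. Its solution is the fixed point of a contraction: an explicit gradient step in the
operator followed by a proximal step in the convex functional.
-/

lemma hasDerivWithinAt_add_smul_iff {X : Type*} [AddCommGroup X] [Module ℝ X] {g : X → ℝ}
    {u v : X} {d : ℝ} :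
    HasDerivWithinAt (fun t : ℝ => g (u + t • v)) d (Set.Ioi 0) 0 ↔
      Tendsto (fun t : ℝ => (g (u + t • v) - g u) / t) (𝓝[>] 0) (𝓝 d) := by
  rw [hasDerivWithinAt_iff_tendsto_slope' Set.self_notMem_Ioi]
  simp [slope_fun_def_field]

section Clarke

lemma eventually_snd_pos {X : Type*} [TopologicalSpace X] (u : X) :
    ∀ᶠ p : X × ℝ in 𝓝 u ×ˢ 𝓝[>] (0 : ℝ), 0 < p.2 :=
  tendsto_snd.eventually self_mem_nhdsWithin

variable {X : Type*} [NormedAddCommGroup X] [NormedSpace ℝ X] {f : X → ℝ}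

lemma tendsto_add_smul_nhds_prod (u v : X) :
    Tendsto (fun p : X × ℝ => p.1 + p.2 • v) (𝓝 u ×ˢ 𝓝[>] (0 : ℝ)) (𝓝 u) := by
  have h : Tendsto (fun p : X × ℝ => p.1 + p.2 • v) (𝓝 u ×ˢ 𝓝 (0 : ℝ)) (𝓝 (u + (0 : ℝ) • v)) :=
    tendsto_fst.add (tendsto_snd.smul_const v)
  rw [zero_smul, add_zero] at h
  exact h.mono_left (prod_mono_right _ nhdsWithin_le_nhds)

lemma exists_eventually_abs_div_le_mul_norm (hf : LocallyLipschitz f) (u : X) :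
    ∃ L : ℝ, ∀ v, ∀ᶠ p : X × ℝ in 𝓝 u ×ˢ 𝓝[>] (0 : ℝ),
      |(f (p.1 + p.2 • v) - f p.1) / p.2| ≤ L * ‖v‖ := by
  obtain ⟨L, s, hs, hL⟩ := hf u
  refine ⟨L, fun v => ?_⟩
  filter_upwards [tendsto_fst.eventually hs, (tendsto_add_smul_nhds_prod u v).eventually hs,
    eventually_snd_pos u] with p hp hpv hpos
  have h := hL.norm_sub_le hpv hp
  rw [add_sub_cancel_left, norm_smul, Real.norm_eq_abs, Real.norm_eq_abs, abs_of_pos hpos] at h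
  rw [abs_div, abs_of_pos hpos, div_le_iff₀ hpos]
  linarith

lemma clarkeDeriv_le_iff (hf : LocallyLipschitz f) {u v : X} {a : ℝ} :
    clarkeDeriv f u v ≤ a ↔ ∀ b > a, ∀ᶠ p : X × ℝ in 𝓝 u ×ˢ 𝓝[>] (0 : ℝ),
      (f (p.1 + p.2 • v) - f p.1) / p.2 < b := by
  obtain ⟨L, hL⟩ := exists_eventually_abs_div_le_mul_norm hf u
  refine limsup_le_iff (IsBoundedUnder.isCoboundedUnder_le ⟨-(L * ‖v‖), ?_⟩) ⟨L * ‖v‖, ?_⟩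
  · exact eventually_map.2 ((hL v).mono fun p hp => (abs_le.1 hp).1)
  · exact eventually_map.2 ((hL v).mono fun p hp => (abs_le.1 hp).2)

lemma eventually_div_lt_of_clarkeDeriv_lt (hf : LocallyLipschitz f) {u v : X} {b : ℝ}
    (h : clarkeDeriv f u v < b) :
    ∀ᶠ t : ℝ in 𝓝[>] 0, (f (u + t • v) - f u) / t < b :=
  (tendsto_const_nhds.prodMk tendsto_id).eventually ((clarkeDeriv_le_iff hf).1 le_rfl b h)

lemma exists_clarkeDeriv_le_mul_norm (hf : LocallyLipschitz f) (u : X) :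
    ∃ L : ℝ, ∀ v, clarkeDeriv f u v ≤ L * ‖v‖ := by
  obtain ⟨L, hL⟩ := exists_eventually_abs_div_le_mul_norm hf u
  exact ⟨L, fun v => (clarkeDeriv_le_iff hf).2 fun b hb =>
    (hL v).mono fun p hp => ((abs_le.1 hp).2.trans_lt hb)⟩

lemma clarkeDeriv_smul_le (hf : LocallyLipschitz f) (u v : X) {s : ℝ} (hs : 0 < s) :
    clarkeDeriv f u (s • v) ≤ s * clarkeDeriv f u v := by
  refine (clarkeDeriv_le_iff hf).2 fun b hb => ?_
  have hscale : Tendsto (fun t : ℝ => t * s) (𝓝[>] 0) (𝓝[>] 0) := by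
    refine tendsto_nhdsWithin_iff.2 ⟨?_, ?_⟩
    · have h : Tendsto (fun t : ℝ => t * s) (𝓝 0) (𝓝 (0 * s)) := tendsto_id.mul_const s
      rw [zero_mul] at h
      exact h.mono_left nhdsWithin_le_nhds
    · filter_upwards [self_mem_nhdsWithin] with t ht using mul_pos ht hs
  have hquot := (clarkeDeriv_le_iff hf).1 le_rfl (b / s) ((lt_div_iff₀' hs).2 hb)
  filter_upwards [(tendsto_fst.prodMk (hscale.comp tendsto_snd)).eventually hquot,
    eventually_snd_pos u] with p hp hpos
  simp only [Function.comp_apply] at hp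
  rwa [smul_smul, div_lt_iff₀ hpos, ← div_mul_cancel₀ b hs.ne', mul_assoc, mul_comm s,
    ← div_lt_iff₀ (mul_pos hpos hs)]

lemma clarkeDeriv_zero (f : X → ℝ) (u : X) : clarkeDeriv f u 0 = 0 := by
  simp [clarkeDeriv]

lemma clarkeDeriv_smul (hf : LocallyLipschitz f) (u v : X) {s : ℝ} (hs : 0 ≤ s) :
    clarkeDeriv f u (s • v) = s * clarkeDeriv f u v := by
  obtain rfl | hs := hs.eq_or_lt
  · rw [zero_smul, zero_mul, clarkeDeriv_zero]
  refine le_antisymm (clarkeDeriv_smul_le hf u v hs) ?_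
  have h := clarkeDeriv_smul_le hf u (s • v) (inv_pos.2 hs)
  rwa [smul_smul, inv_mul_cancel₀ hs.ne', one_smul, ← div_eq_inv_mul, le_div_iff₀' hs] at h

lemma clarkeDeriv_add_le (hf : LocallyLipschitz f) (u v w : X) :
    clarkeDeriv f u (v + w) ≤ clarkeDeriv f u v + clarkeDeriv f u w := by
  refine (clarkeDeriv_le_iff hf).2 fun b hb => ?_
  obtain ⟨ε, hε, rfl⟩ : ∃ ε > 0, b = clarkeDeriv f u v + ε + (clarkeDeriv f u w + ε) :=
    ⟨(b - clarkeDeriv f u v - clarkeDeriv f u w) / 2, by linarith, by ring⟩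
  have hv := (clarkeDeriv_le_iff hf).1 le_rfl _ (lt_add_of_pos_right (clarkeDeriv f u v) hε)
  have hw := (clarkeDeriv_le_iff hf).1 le_rfl _ (lt_add_of_pos_right (clarkeDeriv f u w) hε)
  filter_upwards [((tendsto_add_smul_nhds_prod u w).prodMk tendsto_snd).eventually hv, hw]
    with p hpv hpw
  have hsplit : (f (p.1 + p.2 • (v + w)) - f p.1) / p.2 =
      (f (p.1 + p.2 • w + p.2 • v) - f (p.1 + p.2 • w)) / p.2 +
        (f (p.1 + p.2 • w) - f p.1) / p.2 := by
    rw [smul_add, add_comm (p.2 • v), ← add_assoc]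
    ring
  rw [hsplit]
  exact add_lt_add hpv hpw

/-- The relaxed monotonicity condition of hemivariational inequalities. For locally Lipschitz `f` on
a Hilbert space it says that the Clarke subdifferential plus `α` times the identity is monotone. -/
def IsRelaxedMonotone (f : X → ℝ) (α : ℝ) : Prop :=
  ∀ z₁ z₂ : X, clarkeDeriv f z₁ (z₂ - z₁) + clarkeDeriv f z₂ (z₁ - z₂) ≤ α * ‖z₁ - z₂‖ ^ 2

variable {α : ℝ}

lemma clarkeDeriv_neg_le_of_isRelaxedMonotone (hf : LocallyLipschitz f)
    (hmon : IsRelaxedMonotone f α) (z w : X) {s : ℝ} (hs : 0 < s) :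
    clarkeDeriv f (z + s • w) (-w) ≤ α * s * ‖w‖ ^ 2 - clarkeDeriv f z w := by
  have h := hmon z (z + s • w)
  rw [add_sub_cancel_left, sub_add_cancel_left, ← smul_neg, clarkeDeriv_smul hf _ _ hs.le,
    clarkeDeriv_smul hf _ _ hs.le, smul_neg, norm_neg, norm_smul, Real.norm_eq_abs,
    abs_of_pos hs] at h
  have hmul : s * (clarkeDeriv f z w + clarkeDeriv f (z + s • w) (-w)) ≤
      s * (α * s * ‖w‖ ^ 2) := by linarith
  linarith [le_of_mul_le_mul_left hmul hs]

lemma clarkeDeriv_sub_le_of_isRelaxedMonotone (hf : LocallyLipschitz f)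
    (hmon : IsRelaxedMonotone f α) (z w : X) :
    clarkeDeriv f z w - α / 2 * ‖w‖ ^ 2 ≤ f (z + w) - f z := by
  -- Follow the segment from `z + w` back to `z`: relaxed monotonicity bounds the upper right Dini
  -- derivative of `s ↦ f (z + (1 - s) • w)`, and the bound integrates to the claim.
  set a := clarkeDeriv f z w
  set B : ℝ → ℝ := fun s => f (z + w) + α * ‖w‖ ^ 2 * (s - s ^ 2 / 2) - a * s with hB
  have hderiv (s : ℝ) : HasDerivAt B (α * (1 - s) * ‖w‖ ^ 2 - a) s := by
    have hquad : HasDerivAt (fun s : ℝ => s - s ^ 2 / 2) (1 - s) s := by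
      simpa using (hasDerivAt_id' s).fun_sub ((hasDerivAt_pow 2 s).div_const 2)
    have h := ((hquad.const_mul (α * ‖w‖ ^ 2)).const_add (f (z + w))).sub
      ((hasDerivAt_id s).const_mul a)
    exact h.congr_deriv (by ring)
  have hcont : Continuous fun s : ℝ => f (z + (1 - s) • w) := hf.continuous.comp (by fun_prop)
  have hslope (s : ℝ) (hs : s ∈ Set.Ico (0 : ℝ) 1) (r : ℝ) (hr : α * (1 - s) * ‖w‖ ^ 2 - a < r) :
      ∃ᶠ y in 𝓝[>] s, slope (fun s : ℝ => f (z + (1 - s) • w)) s y < r := by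
    have hback := (clarkeDeriv_neg_le_of_isRelaxedMonotone hf hmon z w (sub_pos.2 hs.2)).trans_lt hr
    have hshift : Tendsto (fun y : ℝ => y - s) (𝓝[>] s) (𝓝[>] 0) := by
      rw [← sub_self s]
      exact (tendsto_id.sub_const s).inf (tendsto_principal_principal.2 fun y hy =>
        sub_lt_sub_right hy s)
    refine Eventually.frequently ?_
    filter_upwards [hshift.eventually (eventually_div_lt_of_clarkeDeriv_lt hf hback)] with y hy
    rw [show z + (1 - s) • w + (y - s) • -w = z + (1 - y) • w by module] at hy
    rwa [slope_def_field]
  have hend := image_le_of_liminf_slope_right_le_deriv_boundary (B := B) hcont.continuousOn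
    (by simp [hB]) (fun s _ => (hderiv s).continuousAt.continuousWithinAt)
    (fun s _ => (hderiv s).hasDerivWithinAt) hslope (Set.right_mem_Icc.2 zero_le_one)
  simp only [hB, sub_self, zero_smul, add_zero] at hend
  linarith

lemma strongConvexOn_of_isRelaxedMonotone (hf : LocallyLipschitz f)
    (hmon : IsRelaxedMonotone f α) : StrongConvexOn Set.univ (-α) f := by
  refine ⟨convex_univ, fun x _ y _ a b ha hb hab => ?_⟩
  obtain rfl : b = 1 - a := by linarith
  set p := a • x + (1 - a) • y with hp
  have hsublinear : 0 ≤ a * clarkeDeriv f p (x - p) + (1 - a) * clarkeDeriv f p (y - p) := by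
    rw [← clarkeDeriv_smul hf _ _ ha, ← clarkeDeriv_smul hf _ _ hb, ← clarkeDeriv_zero f p]
    convert clarkeDeriv_add_le hf p (a • (x - p)) ((1 - a) • (y - p)) using 2
    rw [hp]
    module
  have hx := clarkeDeriv_sub_le_of_isRelaxedMonotone hf hmon p (x - p)
  have hy := clarkeDeriv_sub_le_of_isRelaxedMonotone hf hmon p (y - p)
  rw [add_sub_cancel, show x - p = (1 - a) • (x - y) by rw [hp]; module, norm_smul,
    Real.norm_of_nonneg hb] at hx
  rw [add_sub_cancel, show y - p = (-a) • (x - y) by rw [hp]; module, norm_smul,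
    norm_neg, Real.norm_of_nonneg ha] at hy
  rw [show x - p = (1 - a) • (x - y) by rw [hp]; module,
    show y - p = (-a) • (x - y) by rw [hp]; module] at hsublinear
  simp only [smul_eq_mul]
  linarith [mul_le_mul_of_nonneg_left hx ha, mul_le_mul_of_nonneg_left hy hb]

lemma hasDerivWithinAt_clarkeDeriv (hf : LocallyLipschitz f) (hmon : IsRelaxedMonotone f α)
    (z w : X) :
    HasDerivWithinAt (fun t : ℝ => f (z + t • w)) (clarkeDeriv f z w) (Set.Ioi 0) 0 := by
  rw [hasDerivWithinAt_add_smul_iff]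
  refine tendsto_order.2 ⟨fun b hb => ?_, fun b hb => eventually_div_lt_of_clarkeDeriv_lt hf hb⟩
  have hlim : Tendsto (fun t : ℝ => clarkeDeriv f z w - α / 2 * t * ‖w‖ ^ 2) (𝓝[>] 0)
      (𝓝 (clarkeDeriv f z w)) := by
    have h : Continuous fun t : ℝ => clarkeDeriv f z w - α / 2 * t * ‖w‖ ^ 2 := by fun_prop
    simpa using (h.tendsto 0).mono_left nhdsWithin_le_nhds
  filter_upwards [hlim.eventually (lt_mem_nhds hb), self_mem_nhdsWithin] with t hbt ht
  have h := clarkeDeriv_sub_le_of_isRelaxedMonotone hf hmon z (t • w)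
  rw [clarkeDeriv_smul hf _ _ (le_of_lt ht), norm_smul, Real.norm_eq_abs, abs_of_pos ht] at h
  refine hbt.trans_le ((le_div_iff₀ ht).2 ?_)
  linarith

end Clarke

section SlopeGrowth

variable {X : Type*} [NormedAddCommGroup X] {f : X → ℝ}

/-- Functions whose increments obey the estimate that follows, by integration along segments, from
a bound `C * (1 + ‖z‖)` on the slopes at `z`. This is what makes `f` act on `L²` by superposition,
with the same kind of estimate for the resulting integral functional. -/
def HasLinearSlopeGrowth (f : X → ℝ) : Prop :=
  ∃ C, 0 ≤ C ∧ ∀ z w, |f (z + w) - f z| ≤ C * (1 + ‖z‖ + ‖w‖) * ‖w‖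

lemma HasLinearSlopeGrowth.continuous (hf : HasLinearSlopeGrowth f) : Continuous f := by
  obtain ⟨C, -, hC⟩ := hf
  refine continuous_iff_continuousAt.2 fun z => ?_
  have hlim : Tendsto (fun y => C * (1 + ‖z‖ + ‖y - z‖) * ‖y - z‖) (𝓝 z) (𝓝 0) := by
    have h : Continuous fun y => C * (1 + ‖z‖ + ‖y - z‖) * ‖y - z‖ := by fun_prop
    simpa using h.tendsto z
  refine tendsto_iff_norm_sub_tendsto_zero.2
    (squeeze_zero (fun _ => norm_nonneg _) (fun y => ?_) hlim)
  simpa using hC z (y - z)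

end SlopeGrowth

section Subdifferential

variable {X : Type*} [NormedAddCommGroup X] [NormedSpace ℝ X] {f : X → ℝ}

/-- The Clarke subdifferential of `f` at `z`, as a subset of the dual space. -/
def clarkeSubdifferential (f : X → ℝ) (z : X) : Set (X →L[ℝ] ℝ) :=
  {ξ | ∀ w, ξ w ≤ clarkeDeriv f z w}

lemma clarkeSubdifferential_nonempty (hf : LocallyLipschitz f) (z : X) :
    (clarkeSubdifferential f z).Nonempty := by
  obtain ⟨ξ, -, hξ⟩ := exists_extension_of_le_sublinear (⊥ : X →ₗ.[ℝ] ℝ) (clarkeDeriv f z)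
    (fun s hs w => clarkeDeriv_smul hf z w hs.le) (clarkeDeriv_add_le hf z) fun ⟨w, hw⟩ => by
      obtain rfl : w = 0 := hw
      exact ((⊥ : X →ₗ.[ℝ] ℝ).map_zero.trans (clarkeDeriv_zero f z).symm).le
  obtain ⟨L, hL⟩ := exists_clarkeDeriv_le_mul_norm hf z
  refine ⟨ξ.mkContinuous L fun w => abs_le.2 ⟨?_, (hξ w).trans (hL w)⟩, hξ⟩
  have h := (hξ (-w)).trans (hL (-w))
  rw [map_neg, norm_neg] at h
  exact neg_le.1 h

lemma neg_mul_norm_le_clarkeDeriv (hf : LocallyLipschitz f) {z : X} {r : ℝ}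
    (hr : ∀ ξ ∈ clarkeSubdifferential f z, ‖ξ‖ ≤ r) (w : X) :
    -(r * ‖w‖) ≤ clarkeDeriv f z w := by
  obtain ⟨ξ, hξ⟩ := clarkeSubdifferential_nonempty hf z
  exact (abs_le.1 (ξ.le_of_opNorm_le (hr ξ hξ) w)).1.trans (hξ w)

lemma hasLinearSlopeGrowth_of_isRelaxedMonotone {c α : ℝ} (hf : LocallyLipschitz f)
    (hmon : IsRelaxedMonotone f α)
    (hgrowth : ∀ z, ∀ ξ ∈ clarkeSubdifferential f z, ‖ξ‖ ≤ c * (1 + ‖z‖)) :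
    HasLinearSlopeGrowth f := by
  have hlower (z w : X) : -(c * (1 + ‖z‖) * ‖w‖ + α / 2 * ‖w‖ ^ 2) ≤ f (z + w) - f z := by
    linarith [neg_mul_norm_le_clarkeDeriv hf (hgrowth z) w,
      clarkeDeriv_sub_le_of_isRelaxedMonotone hf hmon z w]
  have hbound (z w : X) (r : ℝ) (hr : r ≤ ‖z‖ + ‖w‖) (hr₀ : 0 ≤ r) :
      c * (1 + r) * ‖w‖ + α / 2 * ‖w‖ ^ 2 ≤ (|c| + |α| / 2) * (1 + ‖z‖ + ‖w‖) * ‖w‖ := by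
    have hc : c * (1 + r) ≤ |c| * (1 + ‖z‖ + ‖w‖) :=
      mul_le_mul (le_abs_self c) (by linarith) (by linarith) (abs_nonneg c)
    have hα : α / 2 * ‖w‖ ≤ |α| / 2 * (1 + ‖z‖ + ‖w‖) :=
      mul_le_mul (by linarith [le_abs_self α]) (by linarith [norm_nonneg z]) (norm_nonneg w)
        (by positivity)
    calc c * (1 + r) * ‖w‖ + α / 2 * ‖w‖ ^ 2 = (c * (1 + r) + α / 2 * ‖w‖) * ‖w‖ := by ring
      _ ≤ (|c| * (1 + ‖z‖ + ‖w‖) + |α| / 2 * (1 + ‖z‖ + ‖w‖)) * ‖w‖ := by gcongr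
      _ = _ := by ring
  refine ⟨|c| + |α| / 2, by positivity, fun z w => abs_le.2 ⟨?_, ?_⟩⟩
  · linarith [hlower z w, hbound z w ‖z‖ (le_add_of_nonneg_right (norm_nonneg w)) (norm_nonneg z)]
  · have h := hlower (z + w) (-w)
    rw [add_neg_cancel_right, norm_neg] at h
    linarith [hbound z w ‖z + w‖ (norm_add_le z w) (norm_nonneg _)]

lemma forall_mem_clarkeSubdifferential_norm_le_iff {H : Type*} [NormedAddCommGroup H]
    [InnerProductSpace ℝ H] [CompleteSpace H] {f : H → ℝ} {z : H} {r : ℝ} :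
    (∀ ξ ∈ clarkeSubdifferential f z, ‖ξ‖ ≤ r) ↔
      ∀ ξ : H, (∀ w, ⟪ξ, w⟫ ≤ clarkeDeriv f z w) → ‖ξ‖ ≤ r := by
  simp only [(InnerProductSpace.toDual ℝ H).surjective.forall, clarkeSubdifferential,
    Set.mem_ofPred_eq, InnerProductSpace.toDual_apply_apply, LinearIsometryEquiv.norm_map]

end Subdifferential

section Integral

variable {X Δ : Type*} [NormedAddCommGroup X] [MeasurableSpace Δ] {μ : Measure Δ}

lemma norm_sq_eq_integral_norm_sq (g : Lp X 2 μ) : ‖g‖ ^ 2 = ∫ x, ‖g x‖ ^ 2 ∂μ := by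
  set h := (Lp.memLp g).norm.toLp _
  have hnorm : ‖g‖ = ‖h‖ := by rw [Lp.norm_toLp, eLpNorm_norm, Lp.norm_def]
  rw [hnorm, ← real_inner_self_eq_norm_sq, L2.inner_def]
  refine integral_congr_ae ?_
  filter_upwards [(Lp.memLp g).norm.coeFn_toLp] with x hx
  rw [hx, real_inner_self_eq_norm_sq, norm_norm]

lemma integral_norm_mul_norm_le {Y : Type*} [NormedAddCommGroup Y] (g : Lp X 2 μ) (h : Lp Y 2 μ) :
    ∫ x, ‖g x‖ * ‖h x‖ ∂μ ≤ ‖g‖ * ‖h‖ := by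
  have hinner : ∫ x, ‖g x‖ * ‖h x‖ ∂μ =
      ⟪(Lp.memLp g).norm.toLp _, (Lp.memLp h).norm.toLp _⟫ := by
    rw [L2.inner_def]
    refine integral_congr_ae ?_
    filter_upwards [(Lp.memLp g).norm.coeFn_toLp, (Lp.memLp h).norm.coeFn_toLp] with x hg hh
    rw [hg, hh, real_inner_comm]
    rfl
  rw [hinner]
  refine (real_inner_le_norm _ _).trans_eq ?_
  rw [Lp.norm_toLp, Lp.norm_toLp, eLpNorm_norm, eLpNorm_norm, Lp.norm_def, Lp.norm_def]

variable [IsFiniteMeasure μ]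

lemma integral_norm_le_norm_const_mul_norm (g : Lp X 2 μ) :
    ∫ x, ‖g x‖ ∂μ ≤ ‖Lp.const 2 μ (1 : ℝ)‖ * ‖g‖ := by
  refine Eq.trans_le (integral_congr_ae ?_) (integral_norm_mul_norm_le (Lp.const 2 μ (1 : ℝ)) g)
  filter_upwards [Lp.coeFn_const (p := 2) (μ := μ) (1 : ℝ)] with x hx
  rw [hx, Function.const_apply, norm_one, one_mul]

lemma integrable_one_add_norm_add_norm_mul_norm {Y : Type*} [NormedAddCommGroup Y] {z : Δ → X}
    {w : Δ → Y} (hz : MemLp z 2 μ) (hw : MemLp w 2 μ) :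
    Integrable (fun x => (1 + ‖z x‖ + ‖w x‖) * ‖w x‖) μ :=
  (((memLp_const (1 : ℝ)).add hz.norm).add hw.norm).integrable_mul hw.norm

variable {f : X → ℝ}

namespace HasLinearSlopeGrowth

lemma integrable_comp (hf : HasLinearSlopeGrowth f) {z : Δ → X} (hz : MemLp z 2 μ) :
    Integrable (fun x => f (z x)) μ := by
  have ⟨C, _, hC⟩ := hf
  have hmeas := hf.continuous.comp_aestronglyMeasurable hz.1
  have hsub : Integrable (fun x => f (z x) - f 0) μ := by
    refine ((integrable_one_add_norm_add_norm_mul_norm (memLp_const (0 : X)) hz).const_mul C).mono'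
      (hmeas.sub aestronglyMeasurable_const) (Eventually.of_forall fun x => ?_)
    simpa [mul_assoc] using hC 0 (z x)
  exact (hsub.add (integrable_const (f 0))).congr (Eventually.of_forall fun x => sub_add_cancel _ _)

lemma integral_Lp (hf : HasLinearSlopeGrowth f) :
    HasLinearSlopeGrowth fun g : Lp X 2 μ => ∫ x, f (g x) ∂μ := by
  have ⟨C, hC₀, hC⟩ := hf
  set κ := ‖Lp.const 2 μ (1 : ℝ)‖
  refine ⟨C * (1 + κ), by positivity, fun g h => ?_⟩
  have hnorm : Integrable (fun x => ‖h x‖) μ := ((Lp.memLp h).integrable one_le_two).norm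
  have hmul : Integrable (fun x => ‖g x‖ * ‖h x‖) μ :=
    (Lp.memLp g).norm.integrable_mul (Lp.memLp h).norm
  have hsq : Integrable (fun x => ‖h x‖ * ‖h x‖) μ :=
    (Lp.memLp h).norm.integrable_mul (Lp.memLp h).norm
  have hadd : ∫ x, (1 + ‖g x‖ + ‖h x‖) * ‖h x‖ ∂μ =
      ∫ x, ‖h x‖ ∂μ + ∫ x, ‖g x‖ * ‖h x‖ ∂μ + ∫ x, ‖h x‖ * ‖h x‖ ∂μ := by
    rw [← integral_add hnorm hmul, ← integral_add (hnorm.fun_add hmul) hsq]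
    simp only [add_mul, one_mul]
  rw [← integral_sub (hf.integrable_comp (Lp.memLp _)) (hf.integrable_comp (Lp.memLp _))]
  calc |∫ x, (f ((g + h : Lp X 2 μ) x) - f (g x)) ∂μ|
      ≤ ∫ x, C * ((1 + ‖g x‖ + ‖h x‖) * ‖h x‖) ∂μ := by
        rw [← Real.norm_eq_abs]
        refine norm_integral_le_of_norm_le
          ((integrable_one_add_norm_add_norm_mul_norm (Lp.memLp g) (Lp.memLp h)).const_mul C) ?_
        filter_upwards [Lp.coeFn_add g h] with x hx
        rw [hx, ← mul_assoc]
        exact hC _ _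
    _ = C * (∫ x, ‖h x‖ ∂μ + ∫ x, ‖g x‖ * ‖h x‖ ∂μ + ∫ x, ‖h x‖ * ‖h x‖ ∂μ) := by
        rw [integral_const_mul, hadd]
    _ ≤ C * (κ * ‖h‖ + ‖g‖ * ‖h‖ + ‖h‖ * ‖h‖) := by
        gcongr
        · exact integral_norm_le_norm_const_mul_norm h
        · exact integral_norm_mul_norm_le g h
        · exact integral_norm_mul_norm_le h h
    _ ≤ C * (1 + κ) * (1 + ‖g‖ + ‖h‖) * ‖h‖ := by
        have hκ : 0 ≤ κ * (‖g‖ + ‖h‖) := by positivity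
        rw [← add_mul, ← add_mul, ← mul_assoc, mul_assoc C (1 + κ)]
        gcongr
        linarith

variable [NormedSpace ℝ X]

lemma hasDerivWithinAt_integral (hf : HasLinearSlopeGrowth f) {z w : Δ → X} {d : Δ → ℝ}
    (hz : MemLp z 2 μ) (hw : MemLp w 2 μ)
    (hd : ∀ x, HasDerivWithinAt (fun t : ℝ => f (z x + t • w x)) (d x) (Set.Ioi 0) 0) :
    HasDerivWithinAt (fun t : ℝ => ∫ x, f (z x + t • w x) ∂μ) (∫ x, d x ∂μ) (Set.Ioi 0) 0 := by
  refine (hasDerivWithinAt_add_smul_iff (g := fun y : Δ → X => ∫ x, f (y x) ∂μ)).2 ?_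
  have ⟨C, hC₀, hC⟩ := hf
  have hint (t : ℝ) : Integrable (fun x => f (z x + t • w x)) μ :=
    hf.integrable_comp (hz.add (hw.const_smul t))
  have hquot (t : ℝ) : (∫ x, f (z x + t • w x) ∂μ - ∫ x, f (z x) ∂μ) / t =
      ∫ x, (f (z x + t • w x) - f (z x)) / t ∂μ := by
    rw [integral_div, integral_sub (hint t) (hf.integrable_comp hz)]
  refine Tendsto.congr (fun t => (hquot t).symm) ?_
  refine tendsto_integral_filter_of_dominated_convergence _
    (Eventually.of_forall fun t => (((hint t).sub (hf.integrable_comp hz)).div_const t).1) ?_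
    ((integrable_one_add_norm_add_norm_mul_norm hz hw).const_mul C)
    (Eventually.of_forall fun x => hasDerivWithinAt_add_smul_iff.1 (hd x))
  filter_upwards [Ioc_mem_nhdsGT one_pos] with t ht
  refine Eventually.of_forall fun x => ?_
  rw [Real.norm_eq_abs, abs_div, abs_of_pos ht.1, div_le_iff₀ ht.1]
  have htw : ‖t • w x‖ = t * ‖w x‖ := by rw [norm_smul, Real.norm_of_nonneg ht.1.le]
  calc |f (z x + t • w x) - f (z x)|
      ≤ C * (1 + ‖z x‖ + ‖t • w x‖) * ‖t • w x‖ := hC _ _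
    _ = C * (1 + ‖z x‖ + t * ‖w x‖) * (t * ‖w x‖) := by rw [htw]
    _ ≤ C * (1 + ‖z x‖ + ‖w x‖) * (t * ‖w x‖) := by
      have := ht.1.le
      gcongr
      exact mul_le_of_le_one_left (norm_nonneg _) ht.2
    _ = C * ((1 + ‖z x‖ + ‖w x‖) * ‖w x‖) * t := by ring

lemma hasDerivWithinAt_integral_Lp (hf : HasLinearSlopeGrowth f) {d : X → X → ℝ}
    (hd : ∀ z w, HasDerivWithinAt (fun t : ℝ => f (z + t • w)) (d z w) (Set.Ioi 0) 0)
    (g k : Lp X 2 μ) :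
    HasDerivWithinAt (fun t : ℝ => ∫ x, f ((g + t • (k - g)) x) ∂μ) (∫ x, d (g x) (k x - g x) ∂μ)
      (Set.Ioi 0) 0 := by
  have hcongr (t : ℝ) : ∫ x, f ((g + t • (k - g)) x) ∂μ =
      ∫ x, f (g x + t • (k x - g x)) ∂μ := by
    refine integral_congr_ae ?_
    filter_upwards [Lp.coeFn_add g (t • (k - g)), Lp.coeFn_smul t (k - g), Lp.coeFn_sub k g]
      with x hadd hsmul hsub
    rw [hadd, Pi.add_apply, hsmul, Pi.smul_apply, hsub, Pi.sub_apply]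
  simp_rw [hcongr]
  exact hf.hasDerivWithinAt_integral (Lp.memLp g) ((Lp.memLp k).sub (Lp.memLp g))
    fun x => hd (g x) (k x - g x)

end HasLinearSlopeGrowth

lemma strongConvexOn_integral_Lp [NormedSpace ℝ X] {m : ℝ} (hf : HasLinearSlopeGrowth f)
    (hconv : StrongConvexOn Set.univ m f) :
    StrongConvexOn Set.univ m fun g : Lp X 2 μ => ∫ x, f (g x) ∂μ := by
  refine ⟨convex_univ, fun g _ k _ a b ha hb hab => ?_⟩
  have hint (h : Lp X 2 μ) : Integrable (fun x => f (h x)) μ := hf.integrable_comp (Lp.memLp h)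
  have hsq : Integrable (fun x => ‖(g - k) x‖ ^ 2) μ := (Lp.memLp (g - k)).norm.integrable_sq
  have hcombo := ((hint g).const_mul a).fun_add ((hint k).const_mul b)
  have hquad := hsq.const_mul (a * b * (m / 2))
  calc ∫ x, f ((a • g + b • k) x) ∂μ
      ≤ ∫ x, (a * f (g x) + b * f (k x) - a * b * (m / 2) * ‖(g - k) x‖ ^ 2) ∂μ := by
        refine integral_mono_ae (hint _) (hcombo.sub hquad) ?_
        filter_upwards [Lp.coeFn_add (a • g) (b • k), Lp.coeFn_smul a g, Lp.coeFn_smul b k,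
          Lp.coeFn_sub g k] with x hadd hga hkb hsub
        rw [hadd, Pi.add_apply, hga, hkb, hsub, mul_assoc (a * b)]
        exact hconv.2 (Set.mem_univ (g x)) (Set.mem_univ (k x)) ha hb hab
    _ = _ := by
        rw [integral_sub hcombo hquad, integral_add ((hint g).const_mul a) ((hint k).const_mul b)]
        simp only [integral_const_mul, smul_eq_mul, norm_sq_eq_integral_norm_sq, mul_assoc]

end Integral

section StrongConvexity

variable {V : Type*} [NormedAddCommGroup V] [NormedSpace ℝ V] {S : Set V} {g : V → ℝ} {m : ℝ}
  {u v : V}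

lemma strongConvexOn_comp_of_norm_le {F : Type*} [NormedAddCommGroup F] [NormedSpace ℝ F]
    {Ψ : F → ℝ} {α c : ℝ} (γ : V →L[ℝ] F) (hγ : ∀ v, ‖γ v‖ ≤ c * ‖v‖) (hα : 0 ≤ α)
    (hΨ : StrongConvexOn Set.univ (-α) Ψ) :
    StrongConvexOn Set.univ (-(α * c ^ 2)) fun v => Ψ (γ v) := by
  refine ⟨convex_univ, fun x _ y _ a b ha hb hab => ?_⟩
  have hconv := hΨ.2 (Set.mem_univ (γ x)) (Set.mem_univ (γ y)) ha hb hab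
  have hsq : ‖γ x - γ y‖ ^ 2 ≤ c ^ 2 * ‖x - y‖ ^ 2 := by
    rw [← map_sub, ← mul_pow]
    exact pow_le_pow_left₀ (norm_nonneg _) (hγ _) 2
  have hcoeff : 0 ≤ a * b * (α / 2) := by positivity
  simp only [map_add, map_smul, smul_eq_mul] at hconv ⊢
  linarith [mul_le_mul_of_nonneg_left hsq hcoeff]

lemma div_le_sub_of_strongConvexOn (hg : StrongConvexOn S m g) (hu : u ∈ S) (hv : v ∈ S) {t : ℝ}
    (ht₀ : 0 < t) (ht₁ : t ≤ 1) :
    (g (u + t • (v - u)) - g u) / t ≤ g v - g u - (1 - t) * (m / 2 * ‖v - u‖ ^ 2) := by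
  have h := hg.2 hv hu ht₀.le (sub_nonneg.2 ht₁) (add_sub_cancel t 1)
  rw [show t • v + (1 - t) • u = u + t • (v - u) by module] at h
  simp only [smul_eq_mul] at h
  rw [div_le_iff₀ ht₀]
  linarith

lemma le_sub_of_strongConvexOn_of_eventually_le (hg : StrongConvexOn S m g) (hu : u ∈ S)
    (hv : v ∈ S) {b : ℝ → ℝ} {d : ℝ} (hb : Tendsto b (𝓝[>] 0) (𝓝 d))
    (hle : ∀ᶠ t : ℝ in 𝓝[>] 0, b t ≤ (g (u + t • (v - u)) - g u) / t) :
    d + m / 2 * ‖v - u‖ ^ 2 ≤ g v - g u := by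
  have hlim : Tendsto (fun t : ℝ => g v - g u - (1 - t) * (m / 2 * ‖v - u‖ ^ 2)) (𝓝[>] 0)
      (𝓝 (g v - g u - m / 2 * ‖v - u‖ ^ 2)) := by
    have h : Continuous fun t : ℝ => g v - g u - (1 - t) * (m / 2 * ‖v - u‖ ^ 2) := by fun_prop
    simpa using (h.tendsto 0).mono_left nhdsWithin_le_nhds
  refine le_sub_iff_add_le.1 (le_of_tendsto_of_tendsto hb hlim ?_)
  filter_upwards [hle, Ioc_mem_nhdsGT one_pos] with t hbt ht
  exact hbt.trans (div_le_sub_of_strongConvexOn hg hu hv ht.1 ht.2)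

lemma add_sq_le_sub_of_hasDerivWithinAt (hg : StrongConvexOn S m g) (hu : u ∈ S) (hv : v ∈ S)
    {d : ℝ} (hd : HasDerivWithinAt (fun t : ℝ => g (u + t • (v - u))) d (Set.Ioi 0) 0) :
    d + m / 2 * ‖v - u‖ ^ 2 ≤ g v - g u :=
  le_sub_of_strongConvexOn_of_eventually_le hg hu hv (hasDerivWithinAt_add_smul_iff.1 hd)
    (Eventually.of_forall fun _ => le_rfl)

lemma add_sq_le_of_isMinOn (hg : StrongConvexOn S m g) (hmin : IsMinOn g S u) (hu : u ∈ S)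
    (hv : v ∈ S) : g u + m / 2 * ‖v - u‖ ^ 2 ≤ g v := by
  have h := le_sub_of_strongConvexOn_of_eventually_le hg hu hv
    (tendsto_const_nhds (x := (0 : ℝ))) ?_
  · linarith
  filter_upwards [Ioc_mem_nhdsGT one_pos] with t ht
  refine div_nonneg (sub_nonneg.2 (hmin (hg.1.add_smul_sub_mem hu hv ⟨ht.1.le, ht.2⟩))) ht.1.le

lemma forall_add_deriv_nonneg_iff {Φ j : V → ℝ} {β : ℝ} {j' : V → ℝ} (ℓ : V →ₗ[ℝ] ℝ)
    (hΦ : ConvexOn ℝ S Φ) (hj : StrongConvexOn S (-β) j) (hu : u ∈ S)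
    (hj' : ∀ v ∈ S, HasDerivWithinAt (fun t : ℝ => j (u + t • (v - u))) (j' v) (Set.Ioi 0) 0) :
    (∀ v ∈ S, 0 ≤ ℓ (v - u) + (Φ v - Φ u) + j' v) ↔
      ∀ v ∈ S, 0 ≤ ℓ (v - u) + (Φ v - Φ u) + (j v - j u + β / 2 * ‖v - u‖ ^ 2) := by
  refine ⟨fun h v hv => ?_, fun h v hv => ?_⟩
  · linarith [h v hv, add_sq_le_sub_of_hasDerivWithinAt hj hu hv (hj' v hv)]
  have hlim : Tendsto (fun t : ℝ => ℓ (v - u) + (Φ v - Φ u) +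
      ((j (u + t • (v - u)) - j u) / t + β / 2 * t * ‖v - u‖ ^ 2)) (𝓝[>] 0)
      (𝓝 (ℓ (v - u) + (Φ v - Φ u) + j' v)) := by
    have hrem : Continuous fun t : ℝ => β / 2 * t * ‖v - u‖ ^ 2 := by fun_prop
    simpa using ((hasDerivWithinAt_add_smul_iff.1 (hj' v hv)).add
      ((hrem.tendsto 0).mono_left nhdsWithin_le_nhds)).const_add (ℓ (v - u) + (Φ v - Φ u))
  refine ge_of_tendsto hlim ?_
  filter_upwards [Ioc_mem_nhdsGT one_pos] with t ht
  have hΦt : (Φ (u + t • (v - u)) - Φ u) / t ≤ Φ v - Φ u := by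
    simpa using div_le_sub_of_strongConvexOn (strongConvexOn_zero.2 hΦ) hu hv ht.1 ht.2
  have hvi := h _ (hj.1.add_smul_sub_mem hu hv ⟨ht.1.le, ht.2⟩)
  rw [add_sub_cancel_left, map_smul, smul_eq_mul, norm_smul, Real.norm_of_nonneg ht.1.le] at hvi
  rw [div_le_iff₀ ht.1] at hΦt
  refine nonneg_of_mul_nonneg_right (hvi.trans ?_) ht.1
  have hquot := mul_div_cancel₀ (j (u + t • (v - u)) - j u) ht.1.ne'
  linarith

end StrongConvexity

section Minimization

variable {V : Type*} [NormedAddCommGroup V] [InnerProductSpace ℝ V] {S : Set V} {g : V → ℝ}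
  {m : ℝ}

lemma bddBelow_image_of_strongConvexOn (hm : 0 < m) (hS : IsClosed S)
    (hg : StrongConvexOn S m g) (hlsc : LowerSemicontinuousOn g S) : BddBelow (g '' S) := by
  obtain rfl | ⟨x, hx⟩ := S.eq_empty_or_nonempty
  · simp
  have hlsc' : LowerSemicontinuousOn (fun v => g v - m / 2 * ‖v‖ ^ 2) S := by
    have hcont : Continuous fun v : V => -(m / 2 * ‖v‖ ^ 2) := by fun_prop
    simpa only [sub_eq_add_neg] using hlsc.add hcont.continuousOn.lowerSemicontinuousOn
  obtain ⟨ℓ, b, hℓ, -⟩ := (strongConvexOn_iff_convex.1 hg).exists_affine_le_of_lt (𝕜 := ℝ) hx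
    (sub_one_lt _) hS hlsc'
  refine ⟨b - ‖ℓ‖ ^ 2 / (2 * m), ?_⟩
  rintro _ ⟨v, hv, rfl⟩
  have haffine : ℓ v + b ≤ g v - m / 2 * ‖v‖ ^ 2 := hℓ ⟨v, hv⟩
  have hop : -(‖ℓ‖ * ‖v‖) ≤ ℓ v := (abs_le.1 (ℓ.le_opNorm v)).1
  have hsq : m / 2 * ‖v‖ ^ 2 - ‖ℓ‖ * ‖v‖ + ‖ℓ‖ ^ 2 / (2 * m) = (m * ‖v‖ - ‖ℓ‖) ^ 2 / (2 * m) := by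
    field_simp
    ring
  have : 0 ≤ (m * ‖v‖ - ‖ℓ‖) ^ 2 / (2 * m) := by positivity
  linarith

lemma exists_isMinOn_of_strongConvexOn [CompleteSpace V] (hm : 0 < m) (hS : IsClosed S)
    (hne : S.Nonempty) (hg : StrongConvexOn S m g) (hlsc : LowerSemicontinuousOn g S) :
    ∃ u ∈ S, IsMinOn g S u := by
  have hbdd := bddBelow_image_of_strongConvexOn hm hS hg hlsc
  obtain ⟨a, hanti, hlim, ha⟩ := exists_seq_tendsto_sInf (hne.image g) hbdd
  choose u hu hua using ha
  set I := sInf (g '' S)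
  have hI {v : V} (hv : v ∈ S) : I ≤ g v := csInf_le hbdd (Set.mem_image_of_mem g hv)
  have hdist (n k : ℕ) (hnk : n ≤ k) : dist (u n) (u k) ≤ √(8 / m * (a n - I)) := by
    have hmid := hg.2 (hu n) (hu k) one_half_pos.le one_half_pos.le (add_halves 1)
    have hImid := hI (hg.1 (hu n) (hu k) one_half_pos.le one_half_pos.le (add_halves 1))
    simp only [smul_eq_mul, hua] at hmid
    refine Real.le_sqrt_of_sq_le ?_
    rw [dist_eq_norm, div_mul_eq_mul_div, le_div_iff₀ hm]
    linarith [hanti hnk]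
  have hgap : Tendsto (fun n => √(8 / m * (a n - I))) atTop (𝓝 0) := by
    simpa using ((hlim.sub_const I).const_mul (8 / m)).sqrt
  obtain ⟨u₀, hu₀⟩ := cauchySeq_tendsto_of_complete (cauchySeq_of_le_tendsto_0' _ hdist hgap)
  have hu₀S : u₀ ∈ S := hS.mem_of_tendsto hu₀ (Eventually.of_forall hu)
  refine ⟨u₀, hu₀S, isMinOn_iff.2 fun v hv => le_trans ?_ (hI hv)⟩
  refine le_of_forall_lt_imp_le_of_dense fun y hy => ge_of_tendsto hlim ?_
  have hev := (tendsto_nhdsWithin_iff.2 ⟨hu₀, Eventually.of_forall hu⟩).eventually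
    (hlsc u₀ hu₀S y hy)
  exact hev.mono fun n hn => hua n ▸ hn.le

lemma exists_proximal_point [CompleteSpace V] {κ : ℝ} (hκ : 0 < κ) (hS : IsClosed S)
    (hne : S.Nonempty) (hg : ConvexOn ℝ S g) (hlsc : LowerSemicontinuousOn g S) (q : V) :
    ∃ u ∈ S, ∀ v ∈ S, 0 ≤ κ * ⟪u - q, v - u⟫ + (g v - g u) := by
  have hconv : StrongConvexOn S κ fun v => g v + κ * (‖v‖ ^ 2 / 2 - ⟪q, v⟫) := by
    rw [strongConvexOn_iff_convex]
    refine (hg.add ((-κ • (innerSL ℝ q).toLinearMap).convexOn hg.1)).congr fun v _ => ?_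
    simp only [ContinuousLinearMap.toLinearMap_innerSL_apply, neg_smul, LinearMap.coe_neg,
      LinearMap.coe_smul, coe_innerₛₗ_apply, Pi.add_apply, Pi.neg_apply, Pi.smul_apply, smul_eq_mul]
    ring
  have hlsc' : LowerSemicontinuousOn (fun v => g v + κ * (‖v‖ ^ 2 / 2 - ⟪q, v⟫)) S := by
    have hcont : Continuous fun v : V => κ * (‖v‖ ^ 2 / 2 - ⟪q, v⟫) := by fun_prop
    exact hlsc.add hcont.continuousOn.lowerSemicontinuousOn
  obtain ⟨u, hu, hmin⟩ := exists_isMinOn_of_strongConvexOn hκ hS hne hconv hlsc'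
  refine ⟨u, hu, fun v hv => ?_⟩
  have h := add_sq_le_of_isMinOn hconv hmin hu hv
  rw [norm_sub_sq_real, real_inner_comm u v] at h
  rw [inner_sub_left, inner_sub_right, inner_sub_right, real_inner_self_eq_norm_sq]
  linarith

end Minimization

section VariationalInequality

variable {V : Type*} [NormedAddCommGroup V] [InnerProductSpace ℝ V] {S : Set V}

lemma norm_sub_le_of_proximal {g : V → ℝ} {κ : ℝ} (hκ : 0 < κ) {u₁ u₂ q₁ q₂ : V}
    (h₁ : 0 ≤ κ * ⟪u₁ - q₁, u₂ - u₁⟫ + (g u₂ - g u₁))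
    (h₂ : 0 ≤ κ * ⟪u₂ - q₂, u₁ - u₂⟫ + (g u₁ - g u₂)) : ‖u₁ - u₂‖ ≤ ‖q₁ - q₂‖ := by
  have hsum : 0 ≤ ⟪u₁ - q₁, u₂ - u₁⟫ + ⟪u₂ - q₂, u₁ - u₂⟫ :=
    nonneg_of_mul_nonneg_right (by linarith) hκ
  have hinner : ⟪u₁ - q₁, u₂ - u₁⟫ + ⟪u₂ - q₂, u₁ - u₂⟫ = ⟪q₁ - q₂, u₁ - u₂⟫ - ‖u₁ - u₂‖ ^ 2 := by
    rw [← real_inner_self_eq_norm_sq, ← neg_sub u₁ u₂, inner_neg_right, ← sub_eq_neg_add,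
      ← inner_sub_left, ← inner_sub_left]
    congr 1
    abel
  have hcs := real_inner_le_norm (q₁ - q₂) (u₁ - u₂)
  obtain h | h := (norm_nonneg (u₁ - u₂)).eq_or_lt
  · exact h ▸ norm_nonneg _
  · exact le_of_mul_le_mul_right (by linarith) h

lemma exists_contractingWith_sub_smul {G : V → V} {L : NNReal} {c : ℝ} (hG : LipschitzWith L G)
    (hc : 0 < c) (hmono : ∀ v w, c * ‖v - w‖ ^ 2 ≤ ⟪G v - G w, v - w⟫) :
    ∃ ρ : ℝ, 0 < ρ ∧ ∃ k, ContractingWith k fun w => w - ρ • G w := by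
  set ρ := c / (L ^ 2 + c ^ 2) with hρ
  have hρ₀ : 0 < ρ := by positivity
  have hρL : ρ * L ^ 2 ≤ c := by
    rw [hρ, div_mul_eq_mul_div, div_le_iff₀ (by positivity)]
    gcongr
    exact le_add_of_nonneg_right (sq_nonneg c)
  have hsq (v w : V) : ‖v - ρ • G v - (w - ρ • G w)‖ ^ 2 ≤ (1 - ρ * c) * ‖v - w‖ ^ 2 := by
    have hlip : ‖G v - G w‖ ^ 2 ≤ L ^ 2 * ‖v - w‖ ^ 2 := by
      rw [← mul_pow]
      exact pow_le_pow_left₀ (norm_nonneg _) (hG.norm_sub_le v w) 2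
    calc ‖v - ρ • G v - (w - ρ • G w)‖ ^ 2
        = ‖(v - w) - ρ • (G v - G w)‖ ^ 2 := by congr 2; module
      _ = ‖v - w‖ ^ 2 - 2 * ρ * ⟪G v - G w, v - w⟫ + ρ ^ 2 * ‖G v - G w‖ ^ 2 := by
        rw [norm_sub_sq_real, real_inner_comm, real_inner_smul_left, norm_smul,
          Real.norm_of_nonneg hρ₀.le]
        ring
      _ ≤ ‖v - w‖ ^ 2 - 2 * ρ * (c * ‖v - w‖ ^ 2) + ρ ^ 2 * (L ^ 2 * ‖v - w‖ ^ 2) := by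
        gcongr
        exact hmono v w
      _ = ‖v - w‖ ^ 2 - 2 * ρ * (c * ‖v - w‖ ^ 2) + ρ * (ρ * L ^ 2) * ‖v - w‖ ^ 2 := by ring
      _ ≤ ‖v - w‖ ^ 2 - 2 * ρ * (c * ‖v - w‖ ^ 2) + ρ * c * ‖v - w‖ ^ 2 := by gcongr
      _ = (1 - ρ * c) * ‖v - w‖ ^ 2 := by ring
  refine ⟨ρ, hρ₀, (√(1 - ρ * c)).toNNReal, ?_, LipschitzWith.of_dist_le' fun v w => ?_⟩
  · rw [Real.toNNReal_lt_one, Real.sqrt_lt' one_pos, one_pow]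
    exact sub_lt_self 1 (mul_pos hρ₀ hc)
  · rw [dist_eq_norm, dist_eq_norm, ← Real.sqrt_sq (norm_nonneg (v - w)),
      ← Real.sqrt_mul' _ (sq_nonneg _)]
    exact Real.le_sqrt_of_sq_le (hsq v w)

theorem existsUnique_variationalInequality [CompleteSpace V] {G : V → V} {J : V → ℝ} {L : NNReal}
    {c : ℝ} (hS : IsClosed S) (hne : S.Nonempty) (hG : LipschitzWith L G) (hc : 0 < c)
    (hmono : ∀ v w, c * ‖v - w‖ ^ 2 ≤ ⟪G v - G w, v - w⟫) (hJ : ConvexOn ℝ S J)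
    (hlsc : LowerSemicontinuousOn J S) :
    ∃! u, u ∈ S ∧ ∀ v ∈ S, 0 ≤ ⟪G u, v - u⟫ + (J v - J u) := by
  obtain ⟨ρ, hρ, k, hk⟩ := exists_contractingWith_sub_smul hG hc hmono
  choose P hPS hP using exists_proximal_point (inv_pos.2 hρ) hS hne hJ hlsc
  have hPlip : LipschitzWith 1 P := LipschitzWith.of_dist_le_mul fun q₁ q₂ => by
    rw [NNReal.coe_one, one_mul, dist_eq_norm, dist_eq_norm]
    exact norm_sub_le_of_proximal (inv_pos.2 hρ) (hP q₁ _ (hPS q₂)) (hP q₂ _ (hPS q₁))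
  have hT : ContractingWith k fun w => P (w - ρ • G w) :=
    ⟨hk.1, (hPlip.comp hk.2).weaken (one_mul k).le⟩
  set u := hT.fixedPoint
  have hfix : P (u - ρ • G u) = u := hT.fixedPoint_isFixedPt
  have huS : u ∈ S := hfix ▸ hPS _
  have huvi (v : V) (hv : v ∈ S) : 0 ≤ ⟪G u, v - u⟫ + (J v - J u) := by
    have h := hP (u - ρ • G u) v hv
    rwa [hfix, sub_sub_cancel, real_inner_smul_left, inv_mul_cancel_left₀ hρ.ne'] at h
  refine ⟨u, ⟨huS, huvi⟩, fun w ⟨hw, hwvi⟩ => ?_⟩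
  have hinner : ⟪G w - G u, w - u⟫ = -⟪G w, u - w⟫ - ⟪G u, w - u⟫ := by
    rw [inner_sub_left, ← inner_neg_right, neg_sub]
  have hsq : c * ‖w - u‖ ^ 2 ≤ 0 := by linarith [hmono w u, hwvi u huS, huvi w hw]
  have hnorm : ‖w - u‖ ^ 2 = 0 :=
    le_antisymm (nonpos_of_mul_nonpos_right hsq hc) (sq_nonneg _)
  exact sub_eq_zero.1 (norm_eq_zero.1 (pow_eq_zero_iff two_ne_zero |>.1 hnorm))

theorem existsUnique_hemivariationalInequality [CompleteSpace V] {B : V → V →L[ℝ] ℝ}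
    {Φ j : V → ℝ} {j' : V → V → ℝ} {L : NNReal} {m β : ℝ} (hS : IsClosed S) (hne : S.Nonempty)
    (hB : LipschitzWith L B) (hmono : ∀ v w, m * ‖v - w‖ ^ 2 ≤ (B v - B w) (v - w)) (hβ : β < m)
    (hΦ : ConvexOn ℝ S Φ) (hΦlsc : LowerSemicontinuousOn Φ S)
    (hj : StrongConvexOn S (-β) j) (hjlsc : LowerSemicontinuousOn j S)
    (hj' : ∀ u ∈ S, ∀ v ∈ S,
      HasDerivWithinAt (fun t : ℝ => j (u + t • (v - u))) (j' u v) (Set.Ioi 0) 0) :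
    ∃! u, u ∈ S ∧ ∀ v ∈ S, 0 ≤ B u (v - u) + (Φ v - Φ u) + j' u v := by
  set G : V → V := fun v => (InnerProductSpace.toDual ℝ V).symm (B v) - β • v with hG
  set J : V → ℝ := fun v => Φ v + (j v + β / 2 * ‖v‖ ^ 2)
  have hGlip : LipschitzWith (1 * L + ‖β‖₊) G :=
    ((InnerProductSpace.toDual ℝ V).symm.lipschitz.comp hB).sub (lipschitzWith_smul β)
  have hGmono (v w : V) : (m - β) * ‖v - w‖ ^ 2 ≤ ⟪G v - G w, v - w⟫ := by
    have hinner : ⟪G v - G w, v - w⟫ = (B v - B w) (v - w) - β * ‖v - w‖ ^ 2 := by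
      rw [hG, sub_sub_sub_comm, ← map_sub, ← smul_sub, inner_sub_left, real_inner_smul_left,
        real_inner_self_eq_norm_sq, InnerProductSpace.toDual_symm_apply]
    linarith [hmono v w]
  have hJconv : ConvexOn ℝ S J := by
    refine hΦ.add ((strongConvexOn_iff_convex.1 hj).congr fun v _ => ?_)
    ring
  have hJlsc : LowerSemicontinuousOn J S := by
    have hcont : Continuous fun v : V => β / 2 * ‖v‖ ^ 2 := by fun_prop
    exact hΦlsc.add (hjlsc.add hcont.continuousOn.lowerSemicontinuousOn)
  refine (existsUnique_congr fun u => and_congr_right fun hu => ?_).1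
    (existsUnique_variationalInequality hS hne hGlip (sub_pos.2 hβ) hGmono hJconv hJlsc)
  refine Iff.trans (forall₂_congr fun v _ => ?_)
    (forall_add_deriv_nonneg_iff (B u).toLinearMap hΦ hj hu (hj' u hu)).symm
  have hnorm : ‖v - u‖ ^ 2 = ‖v‖ ^ 2 - ‖u‖ ^ 2 - 2 * ⟪u, v - u⟫ := by
    rw [norm_sub_sq_real, inner_sub_right, real_inner_self_eq_norm_sq, real_inner_comm]
    ring
  have hinner : ⟪G u, v - u⟫ = B u (v - u) - β * ⟪u, v - u⟫ := by
    rw [hG, inner_sub_left, real_inner_smul_left, InnerProductSpace.toDual_symm_apply]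
  refine iff_of_eq (congrArg _ ?_)
  rw [hinner, hnorm, ContinuousLinearMap.coe_coe]
  ring

end VariationalInequality

theorem stmt14_general {V : Type*} [NormedAddCommGroup V] [InnerProductSpace ℝ V] [CompleteSpace V]
    {X : Type*} [NormedAddCommGroup X] [NormedSpace ℝ X]
    {Δ : Type*} [MeasurableSpace Δ] (μ : Measure Δ) [IsFiniteMeasure μ]
    (γ : V →L[ℝ] Lp X 2 μ) (cΔ : ℝ) (hγ : ∀ v, ‖γ v‖ ≤ cΔ * ‖v‖)
    (ψ : X → ℝ) (hψ : LocallyLipschitz ψ)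
    (cψ : ℝ) (hψgrowth : ∀ z, ∀ ξ ∈ clarkeSubdifferential ψ z, ‖ξ‖ ≤ cψ * (1 + ‖z‖))
    (α : ℝ) (hα : 0 ≤ α) (hψmon : IsRelaxedMonotone ψ α)
    (A : V → V →L[ℝ] ℝ) (L : NNReal) (hA : LipschitzWith L A)
    (m : ℝ) (hAmon : ∀ v w, m * ‖v - w‖ ^ 2 ≤ (A v - A w) (v - w))
    (S : Set V) (hne : S.Nonempty) (hS : IsClosed S)
    (Φ : V → ℝ) (hΦ : ConvexOn ℝ S Φ) (hΦlsc : LowerSemicontinuousOn Φ S)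
    (f : V →L[ℝ] ℝ) (hsmall : α * cΔ ^ 2 < m) :
    ∃! u, u ∈ S ∧ ∀ v ∈ S, f (v - u) ≤
      A u (v - u) + Φ v - Φ u + ∫ x, clarkeDeriv ψ (γ u x) (γ v x - γ u x) ∂μ := by
  have hgrowth := hasLinearSlopeGrowth_of_isRelaxedMonotone hψ hψmon hψgrowth
  set j : V → ℝ := fun v => ∫ x, ψ (γ v x) ∂μ
  have hjconv : StrongConvexOn S (-(α * cΔ ^ 2)) j := by
    have h := strongConvexOn_comp_of_norm_le γ hγ hα
      (strongConvexOn_integral_Lp hgrowth (strongConvexOn_of_isRelaxedMonotone hψ hψmon))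
    exact ⟨hΦ.1, fun v _ w _ => h.2 (Set.mem_univ v) (Set.mem_univ w)⟩
  have hjcont : Continuous j := hgrowth.integral_Lp.continuous.comp γ.continuous
  have hj' (u v : V) : HasDerivWithinAt (fun t : ℝ => j (u + t • (v - u)))
      (∫ x, clarkeDeriv ψ (γ u x) (γ v x - γ u x) ∂μ) (Set.Ioi 0) 0 := by
    simpa only [j, map_add, map_smul, map_sub] using
      hgrowth.hasDerivWithinAt_integral_Lp (hasDerivWithinAt_clarkeDeriv hψ hψmon) (γ u) (γ v)
  have hBmon (v w : V) : m * ‖v - w‖ ^ 2 ≤ ((A v - f) - (A w - f)) (v - w) := by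
    rw [sub_sub_sub_cancel_right]
    exact hAmon v w
  refine (existsUnique_congr fun u => and_congr_right fun _ => forall₂_congr fun v _ => ?_).1
    (existsUnique_hemivariationalInequality hS hne (hA.sub (LipschitzWith.const f)) hBmon hsmall
      hΦ hΦlsc hjconv hjcont.continuousOn.lowerSemicontinuousOn fun u _ v _ => hj' u v)
  rw [sub_apply, ← sub_nonneg (b := f (v - u))]
  ring_nf

theorem stmt14 {V : Type*} [NormedAddCommGroup V] [InnerProductSpace ℝ V] [CompleteSpace V]
    {Δ : Type*} [MeasurableSpace Δ] (μ : Measure Δ) [IsFiniteMeasure μ]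
    (m : ℕ) (hm : 1 ≤ m)
    (γψ : V →L[ℝ] (Lp (EuclideanSpace ℝ (Fin m)) 2 μ))
    (cΔ : ℝ) (hcΔ : 0 < cΔ) (hγ : ∀ v : V, ‖γψ v‖ ≤ cΔ * ‖v‖)
    (ψ : EuclideanSpace ℝ (Fin m) → ℝ)
    (hψlip : ∀ z : EuclideanSpace ℝ (Fin m),
      ∃ (L : NNReal) (s : Set (EuclideanSpace ℝ (Fin m))), s ∈ 𝓝 z ∧ LipschitzOnWith L ψ s)
    (cψ : ℝ) (hcψ : 0 ≤ cψ)
    (hψgrowth : ∀ z ξ : EuclideanSpace ℝ (Fin m),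
      (∀ w, ⟪ξ, w⟫ ≤ clarkeDeriv ψ z w) → ‖ξ‖ ≤ cψ * (1 + ‖z‖))
    (αψ : ℝ) (hαψ : 0 ≤ αψ)
    (hψmon : ∀ z₁ z₂ : EuclideanSpace ℝ (Fin m),
      clarkeDeriv ψ z₁ (z₂ - z₁) + clarkeDeriv ψ z₂ (z₁ - z₂) ≤ αψ * ‖z₁ - z₂‖ ^ 2)
    (K : Set V) (hKne : K.Nonempty) (hKcl : IsClosed K) (hKcv : Convex ℝ K)
    (A : V → (V →L[ℝ] ℝ)) (LA : ℝ) (hLA : 0 < LA)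
    (hALip : ∀ v₁ v₂ : V, ‖A v₁ - A v₂‖ ≤ LA * ‖v₁ - v₂‖)
    (mA : ℝ) (hmA : 0 < mA)
    (hAmon : ∀ v₁ v₂ : V, (A v₁ - A v₂) (v₁ - v₂) ≥ mA * ‖v₁ - v₂‖ ^ 2)
    (Φ : V → ℝ) (hΦcv : ConvexOn ℝ Set.univ Φ) (hΦcont : Continuous Φ)
    (f : V →L[ℝ] ℝ) (hsmall : αψ * cΔ ^ 2 < mA)
    (Vh : Submodule ℝ V) [FiniteDimensional ℝ Vh]
    (Kh : Set V) (hKhne : Kh.Nonempty) (hKhcl : IsClosed Kh) (hKhcv : Convex ℝ Kh)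
    (hKhsub : Kh ⊆ (Vh : Set V)) :
    ∃! uh : V, uh ∈ Kh ∧ ∀ vh ∈ Kh,
      (A uh) (vh - uh) + Φ vh - Φ uh +
        (∫ x, clarkeDeriv ψ ((γψ uh) x) ((γψ vh) x - (γψ uh) x) ∂μ) ≥ f (vh - uh) := by
  exact stmt14_general μ γψ cΔ hγ ψ hψlip cψ
    (fun z => forall_mem_clarkeSubdifferential_norm_le_iff.2 (hψgrowth z)) αψ hαψ hψmon A _
    (LipschitzWith.of_dist_le' (by simpa only [dist_eq_norm] using hALip)) mA hAmon Kh hKhne hKhcl Φ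
    (hΦcv.subset (Set.subset_univ _) hKhcv) hΦcont.continuousOn.lowerSemicontinuousOn f hsmall
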